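/- Let f : ℝ³ → ℝ be a C³ function and W : ℝ³ → ℝ³ a C² vector field, both ℤ³-periodic. Then ∫_{[0,1]³} f (W · ∇(Δf)) dx = ∫_{[0,1]³} [ (1/2) |∇f|² div W + f (∇f · ∇(div W)) + (∇f ⊗ ∇f) : ∇W ] dx. -/

import Mathlib

open scoped BigOperators
open MeasureTheory

noncomputable section

/-- Points of `ℝ³`, realized as `Fin 3 → ℝ`. -/
abbrev V3 : Type := Fin 3 → ℝ

/-- Partial derivative `∂ᵢ f` of a scalar field. -/
def pd (i : Fin 3) (f : V3 → ℝ) (x : V3) : ℝ := fderiv ℝ f x (Pi.single i 1)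

/-- Gradient `∇f` of a scalar field. -/
def grad (f : V3 → ℝ) (x : V3) : V3 := fun i => pd i f x

/-- Divergence `div u` of a vector field. -/
def vdiv (u : V3 → V3) (x : V3) : ℝ := ∑ i, pd i (fun y => u y i) x

/-- Laplacian `Δf` of a scalar field. -/
def lap (f : V3 → ℝ) (x : V3) : ℝ := ∑ i, pd i (fun y => pd i f y) x

/-- Divergence (row-wise) of a matrix field: `(div M)_i = ∑_j ∂_j M_{ij}`. -/
def mdiv (M : V3 → Fin 3 → Fin 3 → ℝ) (x : V3) : V3 :=
  fun i => ∑ j, pd j (fun y => M y i j) x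

/-- Jacobian matrix `(∇u)_{ij} = ∂_j u_i` of a vector field. -/
def jacb (u : V3 → V3) (x : V3) : Fin 3 → Fin 3 → ℝ := fun i j => pd j (fun y => u y i) x

/-- Symmetric part `Du = (∇u + ∇ᵀu)/2` of the Jacobian. -/
def symJ (u : V3 → V3) (x : V3) : Fin 3 → Fin 3 → ℝ :=
  fun i j => (jacb u x i j + jacb u x j i) / 2

/-- Antisymmetric part `Au = (∇u − ∇ᵀu)/2` of the Jacobian. -/
def asymJ (u : V3 → V3) (x : V3) : Fin 3 → Fin 3 → ℝ :=
  fun i j => (jacb u x i j - jacb u x j i) / 2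

/-- Euclidean dot product on `ℝ³`. -/
def dot (a b : V3) : ℝ := ∑ i, a i * b i

/-- Squared Euclidean norm on `ℝ³`. -/
def normSq (a : V3) : ℝ := ∑ i, (a i) ^ 2

/-!
Two integrations by parts on the torus move the derivatives of `Δf` onto the vector field: for every
periodic `V` one has `∫ V · ∇Δf = -∫ Δf div V = ∫ ∇f · ∇(div V)`. For `V = f W` the product rule
expands `∇f · ∇(div (f W))` into the three terms of the claim, except that `|∇f|² div W` comes with
the factor `1` and the Hessian of `f` leaves the extra term `W · ∇(½|∇f|²)`. The difference
to the claim is `div (½|∇f|² W)`, which has zero integral.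
-/

open scoped Matrix

section Definitions

variable {ι E : Type*} [DecidableEq ι] [NormedAddCommGroup E] [NormedSpace ℝ E]

/-- The partial derivative `∂ᵢ f` on `ℝ^ι`, defined as the Fréchet derivative in the `i`-th
coordinate direction. On `Fin 3` and for real-valued `f` it unfolds to `pd`. -/
def partialDeriv (i : ι) (f : (ι → ℝ) → E) (x : ι → ℝ) : E := fderiv ℝ f x (Pi.single i 1)

/-- The gradient of a scalar field on `ℝ^ι` as its vector of partial derivatives. It replaces
`gradient`, which needs an inner product on the domain. -/
def gradientVec (f : (ι → ℝ) → ℝ) (x : ι → ℝ) : ι → ℝ := fun i => partialDeriv i f x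

variable [Fintype ι]

/-- The divergence of a vector field on `ℝ^ι`. -/
def divergence (V : (ι → ℝ) → ι → ℝ) (x : ι → ℝ) : ℝ := ∑ i, partialDeriv i (fun y => V y i) x

/-- The Laplacian of a scalar field on `ℝ^ι`, as the sum of its pure second derivatives. -/
def laplacian (f : (ι → ℝ) → ℝ) (x : ι → ℝ) : ℝ := ∑ i, partialDeriv i (partialDeriv i f) x

/-- The energy density `½|∇f|²` of a scalar field on `ℝ^ι`. -/
def gradientEnergy (f : (ι → ℝ) → ℝ) (x : ι → ℝ) : ℝ :=
  1 / 2 * (gradientVec f x ⬝ᵥ gradientVec f x)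

end Definitions

theorem differentiableAt_dotProduct {X κ : Type*} [NormedAddCommGroup X] [NormedSpace ℝ X]
    [Fintype κ] {U V : X → κ → ℝ} {x : X} (hU : DifferentiableAt ℝ U x)
    (hV : DifferentiableAt ℝ V x) : DifferentiableAt ℝ (fun y => U y ⬝ᵥ V y) x := by
  unfold dotProduct
  fun_prop

section ProductRules

variable {ι : Type*} [Finite ι] [DecidableEq ι]

theorem partialDeriv_mul {f g : (ι → ℝ) → ℝ} {x : ι → ℝ} (hf : DifferentiableAt ℝ f x)
    (hg : DifferentiableAt ℝ g x) (i : ι) :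
    partialDeriv i (fun y => f y * g y) x =
      f x * partialDeriv i g x + g x * partialDeriv i f x := by
  cases nonempty_fintype ι
  simp [partialDeriv, fderiv_fun_mul hf hg]

theorem partialDeriv_dotProduct {κ : Type*} [Fintype κ] {U V : (ι → ℝ) → κ → ℝ} {x : ι → ℝ}
    (hU : DifferentiableAt ℝ U x) (hV : DifferentiableAt ℝ V x) (j : ι) :
    partialDeriv j (fun y => U y ⬝ᵥ V y) x =
      ∑ k, (U x k * partialDeriv j (fun y => V y k) x +
        V x k * partialDeriv j (fun y => U y k) x) := by
  cases nonempty_fintype ι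
  have hUV (k : κ) : DifferentiableAt ℝ (fun y => U y k * V y k) x := by fun_prop
  simp_rw [← partialDeriv_mul (differentiableAt_pi.1 hU _) (differentiableAt_pi.1 hV _)]
  simp [partialDeriv, dotProduct, fderiv_fun_sum fun k _ => hUV k]

theorem gradientVec_add {f g : (ι → ℝ) → ℝ} {x : ι → ℝ} (hf : DifferentiableAt ℝ f x)
    (hg : DifferentiableAt ℝ g x) :
    gradientVec (fun y => f y + g y) x = gradientVec f x + gradientVec g x := by
  cases nonempty_fintype ι
  ext i
  simp [gradientVec, partialDeriv, fderiv_fun_add hf hg]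

theorem gradientVec_mul {f g : (ι → ℝ) → ℝ} {x : ι → ℝ} (hf : DifferentiableAt ℝ f x)
    (hg : DifferentiableAt ℝ g x) :
    gradientVec (fun y => f y * g y) x = f x • gradientVec g x + g x • gradientVec f x :=
  funext (partialDeriv_mul hf hg)

end ProductRules

section PartialDerivatives

variable {ι E : Type*} [Fintype ι] [DecidableEq ι] [NormedAddCommGroup E] [NormedSpace ℝ E]

theorem divergence_gradientVec (f : (ι → ℝ) → ℝ) : divergence (gradientVec f) = laplacian f := rfl

theorem contDiff_partialDeriv {n m : WithTop ℕ∞} {f : (ι → ℝ) → E} (hf : ContDiff ℝ n f)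
    (hmn : m + 1 ≤ n) (i : ι) : ContDiff ℝ m (partialDeriv i f) :=
  (hf.fderiv_right hmn).clm_apply contDiff_const

theorem contDiff_gradientVec {n m : WithTop ℕ∞} {f : (ι → ℝ) → ℝ} (hf : ContDiff ℝ n f)
    (hmn : m + 1 ≤ n) : ContDiff ℝ m (gradientVec f) :=
  contDiff_pi.2 (contDiff_partialDeriv hf hmn)

theorem contDiff_divergence {n m : WithTop ℕ∞} {V : (ι → ℝ) → ι → ℝ} (hV : ContDiff ℝ n V)
    (hmn : m + 1 ≤ n) : ContDiff ℝ m (divergence V) :=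
  ContDiff.sum fun i _ => contDiff_partialDeriv (contDiff_pi.1 hV i) hmn i

theorem contDiff_gradientEnergy {n m : WithTop ℕ∞} {f : (ι → ℝ) → ℝ} (hf : ContDiff ℝ n f)
    (hmn : m + 1 ≤ n) : ContDiff ℝ m (gradientEnergy f) := by
  have hgrad := contDiff_gradientVec hf hmn
  unfold gradientEnergy dotProduct
  fun_prop

theorem divergence_smul {f : (ι → ℝ) → ℝ} {V : (ι → ℝ) → ι → ℝ} {x : ι → ℝ}
    (hf : DifferentiableAt ℝ f x) (hV : DifferentiableAt ℝ V x) :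
    divergence (fun y => f y • V y) x = f x * divergence V x + V x ⬝ᵥ gradientVec f x := by
  simp only [divergence, Pi.smul_apply, smul_eq_mul,
    partialDeriv_mul hf (differentiableAt_pi.1 hV _), Finset.sum_add_distrib, Finset.mul_sum,
    dotProduct, gradientVec]

theorem partialDeriv_comm {f : (ι → ℝ) → E} (hf : ContDiff ℝ 2 f) (i j : ι) (x : ι → ℝ) :
    partialDeriv i (partialDeriv j f) x = partialDeriv j (partialDeriv i f) x := by
  have hdiff : DifferentiableAt ℝ (fderiv ℝ f) x :=
    (hf.fderiv_right (m := 1) (by norm_num)).differentiable (by simp) x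
  have second_eq : ∀ a b : ι, partialDeriv a (partialDeriv b f) x =
      fderiv ℝ (fderiv ℝ f) x (Pi.single a 1) (Pi.single b 1) := fun a b => by
    change fderiv ℝ (fun y => fderiv ℝ f y (Pi.single b 1)) x (Pi.single a 1) = _
    simp [fderiv_clm_apply hdiff (differentiableAt_const _)]
  rw [second_eq, second_eq]
  exact hf.contDiffAt.isSymmSndFDerivAt (by simp) _ _

theorem gradientVec_gradientEnergy {f : (ι → ℝ) → ℝ} (hf : ContDiff ℝ 2 f)
    (x : ι → ℝ) (j : ι) :
    gradientVec (gradientEnergy f) x j =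
      gradientVec f x ⬝ᵥ gradientVec (partialDeriv j f) x := by
  have hgrad : DifferentiableAt ℝ (gradientVec f) x :=
    (contDiff_gradientVec (m := 1) hf (by norm_num)).differentiable (by simp) x
  calc
    _ = 1 / 2 * partialDeriv j (fun y => gradientVec f y ⬝ᵥ gradientVec f y) x := by
      change partialDeriv j (fun y => 1 / 2 * (gradientVec f y ⬝ᵥ gradientVec f y)) x = _
      simp [partialDeriv, fderiv_const_mul (differentiableAt_dotProduct hgrad hgrad)]
    _ = ∑ i, gradientVec f x i * partialDeriv j (partialDeriv i f) x := by
      rw [partialDeriv_dotProduct hgrad hgrad, Finset.mul_sum]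
      exact Finset.sum_congr rfl fun i _ => by simp only [gradientVec]; ring
    _ = gradientVec f x ⬝ᵥ gradientVec (partialDeriv j f) x :=
      Finset.sum_congr rfl fun i _ => by rw [partialDeriv_comm hf]; rfl

theorem gradientVec_dotProduct_gradientVec_dotProduct {f : (ι → ℝ) → ℝ} {W : (ι → ℝ) → ι → ℝ}
    {x : ι → ℝ} (hf : ContDiff ℝ 2 f) (hW : DifferentiableAt ℝ W x) :
    gradientVec f x ⬝ᵥ gradientVec (fun y => W y ⬝ᵥ gradientVec f y) x =
      W x ⬝ᵥ gradientVec (gradientEnergy f) x +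
        ∑ i, ∑ j, gradientVec f x i * gradientVec f x j * partialDeriv j (fun y => W y i) x := by
  have hgrad : DifferentiableAt ℝ (gradientVec f) x :=
    (contDiff_gradientVec (m := 1) hf (by norm_num)).differentiable (by simp) x
  calc
    _ = ∑ j, ∑ i, (W x i * (gradientVec f x j * gradientVec (partialDeriv i f) x j) +
          gradientVec f x i * gradientVec f x j * partialDeriv j (fun y => W y i) x) := by
      refine Finset.sum_congr rfl fun j _ => ?_
      rw [gradientVec, gradientVec, partialDeriv_dotProduct hW hgrad, Finset.mul_sum]
      exact Finset.sum_congr rfl fun i _ => by simp only [gradientVec]; ring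
    _ = _ := by
      rw [Finset.sum_comm]
      simp only [Finset.sum_add_distrib, ← Finset.mul_sum]
      congr 1
      exact Finset.sum_congr rfl fun i _ => by
        rw [gradientVec_gradientEnergy hf]; rfl

theorem gradientVec_dotProduct_gradientVec_divergence_smul {f : (ι → ℝ) → ℝ}
    {W : (ι → ℝ) → ι → ℝ} (hf : ContDiff ℝ 2 f) (hW : ContDiff ℝ 2 W) (x : ι → ℝ) :
    gradientVec f x ⬝ᵥ gradientVec (divergence fun y => f y • W y) x =
      (gradientEnergy f x * divergence W x
        + f x * (gradientVec f x ⬝ᵥ gradientVec (divergence W) x)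
        + ∑ i, ∑ j, gradientVec f x i * gradientVec f x j * partialDeriv j (fun y => W y i) x)
      + divergence (fun y => gradientEnergy f y • W y) x := by
  have hf' : Differentiable ℝ f := hf.differentiable (by simp)
  have hW' : Differentiable ℝ W := hW.differentiable (by simp)
  have hgrad : Differentiable ℝ (gradientVec f) :=
    (contDiff_gradientVec (m := 1) hf (by norm_num)).differentiable (by simp)
  have hdiv : Differentiable ℝ (divergence W) :=
    (contDiff_divergence (m := 1) hW (by norm_num)).differentiable (by simp)
  have henergy : Differentiable ℝ (gradientEnergy f) :=
    (contDiff_gradientEnergy (m := 1) hf (by norm_num)).differentiable (by simp)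
  have div_fW : (divergence fun y => f y • W y) =
      fun y => f y * divergence W y + W y ⬝ᵥ gradientVec f y :=
    funext fun y => divergence_smul (hf' y) (hW' y)
  rw [div_fW, gradientVec_add (hf'.fun_mul hdiv x) (differentiableAt_dotProduct (hW' x) (hgrad x)),
    gradientVec_mul (hf' x) (hdiv x), dotProduct_add, dotProduct_add, dotProduct_smul,
    dotProduct_smul, gradientVec_dotProduct_gradientVec_dotProduct hf (hW' x),
    divergence_smul (henergy x) (hW' x)]
  simp only [gradientEnergy, smul_eq_mul]
  ring

end PartialDerivatives

section Periodic

variable {ι E : Type*} [DecidableEq ι]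

/-- Periodicity with respect to the lattice `ℤ^ι`, encoded by its generators: translating by a
standard basis vector does not change the function. -/
def UnitPeriodic (f : (ι → ℝ) → E) : Prop := ∀ i, Function.Periodic f (Pi.single i 1)

namespace UnitPeriodic

protected theorem apply {κ : Type*} {V : (ι → ℝ) → κ → E} (hV : UnitPeriodic V) (k : κ) :
    UnitPeriodic fun x => V x k := fun i => (hV i).comp (· k)

protected theorem smul {R : Type*} [SMul R E] {f : (ι → ℝ) → R} {V : (ι → ℝ) → E}
    (hf : UnitPeriodic f) (hV : UnitPeriodic V) : UnitPeriodic fun x => f x • V x := fun i x => by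
  simp only [hf i x, hV i x]

protected theorem partialDeriv [Finite ι] [NormedAddCommGroup E] [NormedSpace ℝ E] {f : (ι → ℝ) → E}
    (hf : UnitPeriodic f) (i : ι) : UnitPeriodic (partialDeriv i f) := fun j x => by
  cases nonempty_fintype ι
  have hshift : (fun y => f (y + Pi.single j 1)) = f := funext (hf j)
  unfold partialDeriv
  rw [← fderiv_comp_add_right, hshift]

protected theorem gradientVec [Finite ι] {f : (ι → ℝ) → ℝ} (hf : UnitPeriodic f) :
    UnitPeriodic (gradientVec f) :=
  fun j x => funext fun i => hf.partialDeriv i j x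

variable [Fintype ι]

protected theorem divergence {V : (ι → ℝ) → ι → ℝ} (hV : UnitPeriodic V) :
    UnitPeriodic (divergence V) :=
  fun j x => Finset.sum_congr rfl fun i _ => (hV.apply i).partialDeriv i j x

protected theorem gradientEnergy {f : (ι → ℝ) → ℝ} (hf : UnitPeriodic f) :
    UnitPeriodic (gradientEnergy f) := fun j x => by
  simp only [gradientEnergy, hf.gradientVec j x]

end UnitPeriodic

end Periodic

section PeriodicIntegrals

variable {ι : Type*} [Fintype ι] [DecidableEq ι]

theorem setIntegral_Icc_sum_partialDeriv_eq_zero {E : Type*} [NormedAddCommGroup E]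
    [NormedSpace ℝ E] {F : ι → (ι → ℝ) → E} (hF : ∀ i, ContDiff ℝ 1 (F i))
    (hper : ∀ i, Function.Periodic (F i) (Pi.single i 1)) :
    ∫ x in Set.Icc (0 : ι → ℝ) 1, ∑ i, partialDeriv i (F i) x = 0 := by
  cases isEmpty_or_nonempty ι
  · simp
  obtain ⟨n, hn⟩ := Nat.exists_eq_succ_of_ne_zero (Fintype.card_ne_zero (α := ι))
  let e : ι ≃ Fin (n + 1) := Fintype.equivFinOfCardEq hn
  let L : (ι → ℝ) ≃L[ℝ] (Fin (n + 1) → ℝ) := ContinuousLinearEquiv.piCongrLeft ℝ (fun _ => ℝ) e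
  have L_symm_apply (y : Fin (n + 1) → ℝ) (i : ι) : L.symm y i = y (e i) := rfl
  have L_apply (x : ι → ℝ) (i : ι) : L x (e i) = x i := by
    rw [← L_symm_apply (L x), L.symm_apply_apply]
  have L_symm_single (i : ι) : L.symm (Pi.single (e i) 1) = Pi.single i 1 := by
    ext k
    simp [L_symm_apply, Pi.single_apply]
  have opposite_faces (i : ι) (y : Fin n → ℝ) : L.symm ((e i).insertNth (L 1 (e i)) y) =
      L.symm ((e i).insertNth (L 0 (e i)) y) + Pi.single i 1 := by
    rw [← L_symm_single, ← map_add]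
    congr 1
    ext k
    cases k using (e i).succAboveCases <;> simp [L_apply]
  have hint : IntegrableOn (fun x => ∑ i, partialDeriv i (F i) x) (Set.Icc 0 1) :=
    Continuous.integrableOn_Icc <| continuous_finsetSum _ fun i _ =>
      (contDiff_partialDeriv (m := 0) (hF i) (by simp) i).continuous
  rw [integral_divergence_of_hasFDerivAt_off_countable_of_equiv L
    (fun x y => by simp only [Pi.le_def, ← e.forall_congr_right, L_apply])
    (volume_measurePreserving_piCongrLeft (fun _ => ℝ) e)
    (fun k => F (e.symm k)) (fun k => fderiv ℝ (F (e.symm k))) ∅ Set.countable_empty 0 1 zero_le_one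
    (fun k => (hF (e.symm k)).continuous.continuousOn)
    (fun x _ k => ((hF (e.symm k)).differentiable (by simp) x).hasFDerivAt) _
    (fun x => by simp only [← e.sum_comp, e.symm_apply_apply, L_symm_single, partialDeriv]) hint]
  simp only [← e.sum_comp, e.symm_apply_apply, opposite_faces, hper _ _, sub_self,
    Finset.sum_const_zero]

theorem setIntegral_Icc_divergence_eq_zero {V : (ι → ℝ) → ι → ℝ} (hV : ContDiff ℝ 1 V)
    (hper : UnitPeriodic V) : ∫ x in Set.Icc (0 : ι → ℝ) 1, divergence V x = 0 :=
  setIntegral_Icc_sum_partialDeriv_eq_zero (contDiff_pi.1 hV) fun i => hper.apply i i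

theorem setIntegral_Icc_dotProduct_gradientVec {V : (ι → ℝ) → ι → ℝ} {f : (ι → ℝ) → ℝ}
    (hV : ContDiff ℝ 1 V) (hf : ContDiff ℝ 1 f) (hVper : UnitPeriodic V) (hfper : UnitPeriodic f) :
    ∫ x in Set.Icc (0 : ι → ℝ) 1, V x ⬝ᵥ gradientVec f x =
      -∫ x in Set.Icc (0 : ι → ℝ) 1, f x * divergence V x := by
  have hgrad : Continuous (gradientVec f) :=
    (contDiff_gradientVec (m := 0) hf (by simp)).continuous
  have hdiv : Continuous (divergence V) :=
    (contDiff_divergence (m := 0) hV (by simp)).continuous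
  have hzero := setIntegral_Icc_divergence_eq_zero (hf.fun_smul hV) (hfper.smul hVper)
  simp only [divergence_smul (hf.differentiable (by simp) _) (hV.differentiable (by simp) _)]
    at hzero
  rw [integral_add (hf.continuous.fun_mul hdiv).integrableOn_Icc
    (hV.continuous.dotProduct hgrad).integrableOn_Icc] at hzero
  exact eq_neg_of_add_eq_zero_right hzero

theorem setIntegral_Icc_dotProduct_gradientVec_laplacian {V : (ι → ℝ) → ι → ℝ}
    {f : (ι → ℝ) → ℝ} (hV : ContDiff ℝ 2 V) (hf : ContDiff ℝ 3 f) (hVper : UnitPeriodic V)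
    (hfper : UnitPeriodic f) :
    ∫ x in Set.Icc (0 : ι → ℝ) 1, V x ⬝ᵥ gradientVec (laplacian f) x =
      ∫ x in Set.Icc (0 : ι → ℝ) 1, gradientVec f x ⬝ᵥ gradientVec (divergence V) x := by
  have hgrad : ContDiff ℝ 2 (gradientVec f) := contDiff_gradientVec hf (by norm_num)
  have hlap : ContDiff ℝ 1 (laplacian f) := contDiff_divergence hgrad (by norm_num)
  rw [setIntegral_Icc_dotProduct_gradientVec (hV.of_le (by norm_num)) hlap hVper
      hfper.gradientVec.divergence,
    setIntegral_Icc_dotProduct_gradientVec (hgrad.of_le (by norm_num))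
      (contDiff_divergence hV (by norm_num)) hfper.gradientVec hVper.divergence,
    divergence_gradientVec]
  simp only [mul_comm]

theorem periodic_capillary_ibp_general {f : (ι → ℝ) → ℝ} {W : (ι → ℝ) → ι → ℝ}
    (hf : ContDiff ℝ 3 f) (hW : ContDiff ℝ 2 W) (hfper : UnitPeriodic f)
    (hWper : UnitPeriodic W) :
    ∫ x in Set.Icc (0 : ι → ℝ) 1, f x * (W x ⬝ᵥ gradientVec (laplacian f) x) =
      ∫ x in Set.Icc (0 : ι → ℝ) 1,
        (1 / 2 * (gradientVec f x ⬝ᵥ gradientVec f x) * divergence W x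
          + f x * (gradientVec f x ⬝ᵥ gradientVec (divergence W) x)
          + ∑ i, ∑ j, gradientVec f x i * gradientVec f x j *
              partialDeriv j (fun y => W y i) x) := by
  have hf2 : ContDiff ℝ 2 f := hf.of_le (by norm_num)
  have hfW : ContDiff ℝ 2 fun x => f x • W x := hf2.fun_smul hW
  have henergy : ContDiff ℝ 1 fun x => gradientEnergy f x • W x :=
    (contDiff_gradientEnergy hf2 (by norm_num)).fun_smul (hW.of_le (by norm_num))
  have hcross : Continuous fun x =>
      gradientVec f x ⬝ᵥ gradientVec (divergence fun y => f y • W y) x :=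
    (contDiff_gradientVec (m := 1) hf2 (by norm_num)).continuous.dotProduct
      (contDiff_gradientVec (m := 0) (n := 1) (contDiff_divergence hfW (by norm_num))
        (by simp)).continuous
  calc
    _ = ∫ x in Set.Icc (0 : ι → ℝ) 1, (f x • W x) ⬝ᵥ gradientVec (laplacian f) x := by
      simp only [smul_dotProduct, smul_eq_mul]
    _ = ∫ x in Set.Icc (0 : ι → ℝ) 1,
          gradientVec f x ⬝ᵥ gradientVec (divergence fun y => f y • W y) x :=
      setIntegral_Icc_dotProduct_gradientVec_laplacian hfW hf (hfper.smul hWper) hfper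
    _ = ∫ x in Set.Icc (0 : ι → ℝ) 1,
          (gradientVec f x ⬝ᵥ gradientVec (divergence fun y => f y • W y) x
            - divergence (fun y => gradientEnergy f y • W y) x) := by
      rw [integral_sub hcross.integrableOn_Icc
          (contDiff_divergence (m := 0) henergy (by simp)).continuous.integrableOn_Icc,
        setIntegral_Icc_divergence_eq_zero henergy (hfper.gradientEnergy.smul hWper), sub_zero]
    _ = _ := by
      simp only [gradientVec_dotProduct_gradientVec_divergence_smul hf2 hW, add_sub_cancel_right,
        gradientEnergy]

end PeriodicIntegrals

/-- periodic integration-by-parts identity for the capillary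
remainder term:
`∫ f (W·∇Δf) = ∫ [½|∇f|² div W + f (∇f·∇(div W)) + (∇f⊗∇f) : ∇W]`. -/
theorem periodic_capillary_ibp
    (f : V3 → ℝ) (W : V3 → V3)
    (hf : ContDiff ℝ 3 f) (hW : ContDiff ℝ 2 (fun x : V3 => W x))
    (hfper : ∀ x (k : Fin 3 → ℤ), f (x + fun i => (k i : ℝ)) = f x)
    (hWper : ∀ x (k : Fin 3 → ℤ), W (x + fun i => (k i : ℝ)) = W x) :
    ∫ x in Set.Icc (0 : V3) 1, f x * dot (W x) (grad (fun y => lap f y) x)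
    = ∫ x in Set.Icc (0 : V3) 1,
        ((1 / 2) * normSq (grad f x) * vdiv W x
          + f x * dot (grad f x) (grad (fun y => vdiv W y) x)
          + ∑ i, ∑ j, grad f x i * grad f x j * jacb W x i j) := by
  have unit_shift (i : Fin 3) :
      (Pi.single i 1 : V3) = fun j => ((Pi.single i 1 : Fin 3 → ℤ) j : ℝ) := by
    ext j
    simp [Pi.single_apply]
  have h := periodic_capillary_ibp_general hf hW
    (fun i x => by rw [unit_shift, hfper]) (fun i x => by rw [unit_shift, hWper])
  simp only [normSq, sq]
  exact h
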